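/- Let G be a finite abelian group with exp(G) = n and r(G) = r, and let G₀ ⊆ G be a minimal non-half-factorial LCN-set with min Δ(G₀) = max Δ*(G). Then |G₀| = r + 1, r ≥ n − 1, and for every h ∈ G₀ and every h' ∈ G₀ \ {h}, one has h ∉ ⟨G₀ \ {h, h'}⟩. -/

import Mathlib

open Multiset

section Defs

variable {G : Type*} [AddCommGroup G]

/-- `S` is a zero-sum sequence over `G₀`: a multiset with entries in `G₀` and sum `0`. -/
def IsZeroSumSeq (G₀ : Set G) (S : Multiset G) : Prop :=
  (∀ x ∈ S, x ∈ G₀) ∧ S.sum = 0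

/-- `S` is an atom over `G₀`: a nonempty zero-sum sequence over `G₀` that is not the
union of two nonempty zero-sum sequences over `G₀`. -/
def IsAtomSeq (G₀ : Set G) (S : Multiset G) : Prop :=
  IsZeroSumSeq G₀ S ∧ S ≠ 0 ∧
    ∀ A B : Multiset G, IsZeroSumSeq G₀ A → IsZeroSumSeq G₀ B →
      A ≠ 0 → B ≠ 0 → S ≠ A + B

/-- The set of lengths of `B`: all `k` such that `B` is a union of `k` atoms over `G₀`. -/
def LengthSet (G₀ : Set G) (B : Multiset G) : Set ℕ :=
  {k | ∃ l : Multiset (Multiset G), Multiset.card l = k ∧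
      (∀ A ∈ l, IsAtomSeq G₀ A) ∧ l.sum = B}

/-- The set of successive distances of a set of naturals. -/
def DeltaOf (L : Set ℕ) : Set ℕ :=
  {d | ∃ x ∈ L, ∃ y ∈ L, x < y ∧ y - x = d ∧ ∀ z ∈ L, ¬(x < z ∧ z < y)}

/-- The set of distances `Δ(G₀)`. -/
def DeltaSet (G₀ : Set G) : Set ℕ :=
  {d | ∃ B : Multiset G, IsZeroSumSeq G₀ B ∧ B ≠ 0 ∧ d ∈ DeltaOf (LengthSet G₀ B)}

/-- `G₀` is half-factorial if `Δ(G₀) = ∅`. -/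
def IsHalfFactorialSet (G₀ : Set G) : Prop := DeltaSet G₀ = ∅

/-- `G₀` is minimal non-half-factorial if `Δ(G₀) ≠ ∅` and every proper subset is
half-factorial. -/
def IsMinNonHalfFactorial (G₀ : Set G) : Prop :=
  (DeltaSet G₀).Nonempty ∧ ∀ G₁ : Set G, G₁ ⊂ G₀ → DeltaSet G₁ = ∅

/-- The cross number `k(S) = Σ 1/ord(g)` of a multiset over `G`. -/
noncomputable def crossNumber (S : Multiset G) : ℚ :=
  (S.map (fun g => ((addOrderOf g : ℚ))⁻¹)).sum

/-- `G₀` is an LCN-set if every atom over `G₀` has cross number at least 1. -/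
def IsLCNSet (G₀ : Set G) : Prop :=
  ∀ U : Multiset G, IsAtomSeq G₀ U → 1 ≤ crossNumber U

/-- A subset of `G \ {0}` is independent if any integral linear relation on its elements
has all summands zero. -/
def IsIndependentSet (E : Set G) : Prop :=
  (0 : G) ∉ E ∧ ∀ s : Finset G, ↑s ⊆ E → ∀ f : G → ℤ,
    (∑ e ∈ s, f e • e) = 0 → ∀ e ∈ s, f e • e = 0

/-- `d` is a greatest common divisor of the set `S` of naturals. -/
def IsSetGcd (S : Set ℕ) (d : ℕ) : Prop :=
  (∀ s ∈ S, d ∣ s) ∧ ∀ e : ℕ, (∀ s ∈ S, e ∣ s) → e ∣ d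

end Defs

/-- The set of minimal distances `Δ*(G)`. -/
def DeltaStar (G : Type*) [AddCommGroup G] : Set ℕ :=
  {d | ∃ G₀ : Set G, (DeltaSet G₀).Nonempty ∧ d = sInf (DeltaSet G₀)}

/-- The `p`-rank of a finite abelian group: `log_p` of the order of the `p`-torsion
subgroup `{x | p • x = 0}`. -/
noncomputable def pRank (G : Type*) [AddCommGroup G] (p : ℕ) : ℕ :=
  Nat.log p (Nat.card {x : G // p • x = 0})

/-- The rank of a finite abelian group: the maximum of the `p`-ranks over all primes. -/
noncomputable def rankG (G : Type*) [AddCommGroup G] : ℕ :=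
  sSup {r : ℕ | ∃ p : ℕ, p.Prime ∧ r = pRank G p}

/-!
Let `d = min Δ(G₀)`. Some atom `W` over `G₀` has cross number different from `1`, since a set whose
atoms all have cross number `1` is half-factorial; by minimality `W` contains every element of `G₀`,
and `k(W) > 1` because `G₀` is an LCN-set.

Lower bound `d + 2 ≤ |G₀|`: the sequence `∏ g ^ ord(g)` has cross number `|G₀|` and is a product of
`|G₀|` atoms, but also of `W` and a nonempty cofactor. Since all atoms have cross number at least
`1`, this second factorization has fewer than `|G₀|` atoms, hence at most `|G₀| - d`.

Upper bound `|G₀| ≤ r(G) + 1`: consider the lattice of integer relations among the elements of `G₀`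
and its sublattice spanned by the relations that omit some element. If the two coincided, every
zero-sum sequence over `G₀` would, after multiplication by some sequences `g ^ ord(g)`, be a product
of atoms of cross number `1`; because `ord(g) ≤ d + 2`, these factors could be cancelled, and `W`
could not exist. So the quotient is a nontrivial cyclic group. For a prime `p` dividing its order,
the lattice, with its `i`-th coordinates divided by their greatest common divisor for every `i`,
reduces modulo `p` to at most a line, which gives a subquotient of `G` of `p`-rank `|G₀| - 1`.
A relation expressing `h` through `G₀ \ {h, h'}` would make the two lattices coincide.

Finally `max Δ*(G) ≥ exp(G) - 2` and `max Δ*(G) ≥ r(G) - 1`, as the sets `{g, -g}` and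
`{e₁, …, e_r, e₁ + ⋯ + e_r}` show.
-/

section Monoid

variable {G : Type*} [AddCommGroup G] {S T : Set G} {A B : Multiset G}

/-- The monoid `ℬ(S)` of zero-sum sequences over `S`. -/
def zeroSumSubmonoid (S : Set G) : AddSubmonoid (Multiset G) where
  carrier := {A | IsZeroSumSeq S A}
  zero_mem' := ⟨by simp, by simp⟩
  add_mem' hA hB :=
    ⟨fun x hx => (Multiset.mem_add.1 hx).elim (hA.1 x) (hB.1 x), by
      rw [Multiset.sum_add, hA.2, hB.2, add_zero]⟩

namespace IsZeroSumSeq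

theorem add (hA : IsZeroSumSeq S A) (hB : IsZeroSumSeq S B) : IsZeroSumSeq S (A + B) :=
  (zeroSumSubmonoid S).add_mem hA hB

theorem right_of_add (hA : IsZeroSumSeq S A) (hAB : IsZeroSumSeq S (A + B)) :
    IsZeroSumSeq S B :=
  ⟨fun x hx => hAB.1 x (Multiset.mem_add.2 (.inr hx)), by
    simpa only [Multiset.sum_add, hA.2, zero_add] using hAB.2⟩

end IsZeroSumSeq

namespace IsAtomSeq

theorem of_forall_mem (hA : IsAtomSeq T A) (hS : ∀ x ∈ A, x ∈ S) : IsAtomSeq S A := by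
  refine ⟨⟨hS, hA.1.2⟩, hA.2.1, fun X Y hX hY hX0 hY0 h => ?_⟩
  exact hA.2.2 X Y ⟨fun x hx => hA.1.1 x (h ▸ Multiset.mem_add.2 (.inl hx)), hX.2⟩
    ⟨fun x hx => hA.1.1 x (h ▸ Multiset.mem_add.2 (.inr hx)), hY.2⟩ hX0 hY0 h

theorem eq_of_le (hA : IsAtomSeq S A) (hB : IsZeroSumSeq S B) (hB0 : B ≠ 0) (hle : B ≤ A) :
    A = B := by
  obtain ⟨C, rfl⟩ := Multiset.le_iff_exists_add.1 hle
  by_cases hC : C = 0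
  · rw [hC, add_zero]
  · exact absurd rfl (hA.2.2 B C hB (hB.right_of_add hA.1) hB0 hC)

end IsAtomSeq

end Monoid

section Lengths

variable {G : Type*} [AddCommGroup G] {S : Set G} {A B : Multiset G} {d k m n : ℕ}

theorem IsAtomSeq.one_mem_lengthSet (hA : IsAtomSeq S A) : 1 ∈ LengthSet S A :=
  ⟨{A}, by simp, by simpa using hA, by simp⟩

theorem zero_mem_lengthSet_zero : 0 ∈ LengthSet S (0 : Multiset G) :=
  ⟨0, by simp, by simp, by simp⟩

theorem add_mem_lengthSet (hm : m ∈ LengthSet S A) (hn : n ∈ LengthSet S B) :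
    m + n ∈ LengthSet S (A + B) := by
  obtain ⟨l, rfl, hl, rfl⟩ := hm
  obtain ⟨l', rfl, hl', rfl⟩ := hn
  exact ⟨l + l', by simp, fun A hA => (Multiset.mem_add.1 hA).elim (hl A) (hl' A), by simp⟩

theorem IsAtomSeq.mem_lengthSet_nsmul (hA : IsAtomSeq S A) (n : ℕ) : n ∈ LengthSet S (n • A) :=
  ⟨Multiset.replicate n A, by simp, fun _ hX => Multiset.eq_of_mem_replicate hX ▸ hA, by simp⟩

theorem IsZeroSumSeq.of_mem_lengthSet (hk : k ∈ LengthSet S B) : IsZeroSumSeq S B := by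
  obtain ⟨l, -, hl, rfl⟩ := hk
  exact (zeroSumSubmonoid S).multiset_sum_mem l fun A hA => (hl A hA).1

theorem pos_of_mem_lengthSet (hk : k ∈ LengthSet S B) (hB : B ≠ 0) : 0 < k := by
  obtain ⟨l, rfl, -, rfl⟩ := hk
  exact Multiset.card_pos.2 fun hl => hB (by rw [hl, Multiset.sum_zero])

theorem ne_zero_of_mem_lengthSet (hk : k ∈ LengthSet S B) (hk0 : 0 < k) : B ≠ 0 := by
  obtain ⟨l, rfl, hl, rfl⟩ := hk
  obtain ⟨A, hA⟩ := Multiset.card_pos_iff_exists_mem.1 hk0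
  intro h0
  exact (hl A hA).2.1 (Multiset.le_zero.1 (h0 ▸ Multiset.le_sum_of_mem hA))

theorem IsZeroSumSeq.exists_mem_lengthSet (hB : IsZeroSumSeq S B) : ∃ k, k ∈ LengthSet S B := by
  induction B using Multiset.strongInductionOn with
  | ih B ih =>
    by_cases h0 : B = 0
    · exact ⟨0, h0 ▸ zero_mem_lengthSet_zero⟩
    by_cases hat : IsAtomSeq S B
    · exact ⟨1, hat.one_mem_lengthSet⟩
    · obtain ⟨X, Y, hX, hY, hX0, hY0, rfl⟩ : ∃ X Y : Multiset G,
          IsZeroSumSeq S X ∧ IsZeroSumSeq S Y ∧ X ≠ 0 ∧ Y ≠ 0 ∧ B = X + Y := by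
        by_contra! hcon
        exact hat ⟨hB, h0, hcon⟩
      obtain ⟨m, hm⟩ := ih X (lt_add_of_pos_right X (pos_iff_ne_zero.2 hY0)) hX
      obtain ⟨n, hn⟩ := ih Y (lt_add_of_pos_left Y (pos_iff_ne_zero.2 hX0)) hY
      exact ⟨m + n, add_mem_lengthSet hm hn⟩

theorem IsZeroSumSeq.exists_isAtomSeq_le (hB : IsZeroSumSeq S B) (hB0 : B ≠ 0) :
    ∃ A ≤ B, IsAtomSeq S A := by
  obtain ⟨k, hk⟩ := hB.exists_mem_lengthSet
  have hk0 := pos_of_mem_lengthSet hk hB0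
  obtain ⟨l, rfl, hl, rfl⟩ := hk
  obtain ⟨A, hA⟩ := Multiset.card_pos_iff_exists_mem.1 hk0
  exact ⟨A, Multiset.le_sum_of_mem hA, hl A hA⟩

theorem exists_mem_deltaSet_le (hm : m ∈ LengthSet S B) (hn : n ∈ LengthSet S B) (hmn : m < n) :
    ∃ d ∈ DeltaSet S, m + d ≤ n := by
  classical
  have hex : ∃ y, y ∈ LengthSet S B ∧ m < y := ⟨n, hn, hmn⟩
  obtain ⟨hy, hmy⟩ := Nat.find_spec hex
  have hyn : Nat.find hex ≤ n := Nat.find_min' hex ⟨hn, hmn⟩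
  exact ⟨Nat.find hex - m, ⟨B, .of_mem_lengthSet hm, ne_zero_of_mem_lengthSet hn (by omega),
    m, hm, _, hy, hmy, rfl, fun z hz h => Nat.find_min hex h.2 ⟨hz, h.1⟩⟩, by omega⟩

theorem add_sInf_deltaSet_le (hm : m ∈ LengthSet S B) (hn : n ∈ LengthSet S B) (hmn : m < n) :
    m + sInf (DeltaSet S) ≤ n := by
  obtain ⟨d, hd, hle⟩ := exists_mem_deltaSet_le hm hn hmn
  exact (Nat.add_le_add_left (Nat.sInf_le hd) m).trans hle

theorem pos_of_mem_deltaSet (hd : d ∈ DeltaSet S) : 0 < d := by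
  obtain ⟨-, -, -, x, -, y, -, hxy, rfl, -⟩ := hd
  exact Nat.sub_pos_of_lt hxy

theorem map_eq_nsmul_of_mem_lengthSet {M : Type*} [AddCommMonoid M] {φ : Multiset G →+ M} {u : M}
    (hφ : ∀ A, IsAtomSeq S A → φ A = u) (hk : k ∈ LengthSet S B) : φ B = k • u := by
  obtain ⟨l, rfl, hl, rfl⟩ := hk
  rw [map_multiset_sum, Multiset.map_congr rfl fun A hA => hφ A (hl A hA), Multiset.map_const',
    Multiset.sum_replicate]

theorem addOrderOf_dvd_of_mem_deltaSet {M : Type*} [AddCommGroup M] {φ : Multiset G →+ M} {u : M}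
    (hφ : ∀ A, IsAtomSeq S A → φ A = u) (hd : d ∈ DeltaSet S) : addOrderOf u ∣ d := by
  obtain ⟨B, -, -, x, hx, y, hy, hxy, rfl, -⟩ := hd
  rw [addOrderOf_dvd_iff_nsmul_eq_zero, sub_nsmul u hxy.le, ← map_eq_nsmul_of_mem_lengthSet hφ hx,
    ← map_eq_nsmul_of_mem_lengthSet hφ hy, add_neg_cancel]

end Lengths

section CrossNumber

variable {G : Type*} [AddCommGroup G] {S : Set G} {A B : Multiset G} {g : G} {k : ℕ}

/-- The homomorphism from the free abelian monoid over `G` that gives each `g : G` the weight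
`w g`. -/
def weightHom {M : Type*} [AddCommMonoid M] (w : G → M) : Multiset G →+ M :=
  Multiset.sumAddMonoidHom.comp (Multiset.mapAddMonoidHom w)

/-- The cross number as a homomorphism from the free abelian monoid over `G`. -/
noncomputable def crossNumberHom : Multiset G →+ ℚ := weightHom fun g => (addOrderOf g : ℚ)⁻¹

theorem crossNumberHom_apply (A : Multiset G) : crossNumberHom A = crossNumber A := rfl

theorem crossNumber_add (A B : Multiset G) :
    crossNumber (A + B) = crossNumber A + crossNumber B :=
  map_add crossNumberHom A B

theorem crossNumber_nsmul (n : ℕ) (A : Multiset G) :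
    crossNumber (n • A) = n * crossNumber A := by
  rw [← nsmul_eq_mul]
  exact map_nsmul crossNumberHom n A

theorem crossNumber_eq_card_div {n : ℕ} (hA : ∀ x ∈ A, addOrderOf x = n) :
    crossNumber A = A.card / n := by
  rw [crossNumber, Multiset.map_congr rfl fun x hx => by rw [hA x hx], Multiset.map_const',
    Multiset.sum_replicate, nsmul_eq_mul, div_eq_mul_inv]

theorem crossNumber_sum_eq_card {l : Multiset (Multiset G)} (hl : ∀ A ∈ l, crossNumber A = 1) :
    crossNumber l.sum = l.card := by
  have hmap : l.map crossNumberHom = Multiset.replicate l.card 1 := by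
    rw [← Multiset.map_const']
    exact Multiset.map_congr rfl hl
  rw [← crossNumberHom_apply, map_multiset_sum, hmap, Multiset.sum_replicate, nsmul_one]

theorem crossNumber_nonneg (A : Multiset G) : 0 ≤ crossNumber A :=
  Multiset.sum_nonneg fun _ hx => by
    obtain ⟨g, -, rfl⟩ := Multiset.mem_map.1 hx
    positivity

theorem IsLCNSet.le_crossNumber (hS : IsLCNSet S) (hk : k ∈ LengthSet S B) :
    (k : ℚ) ≤ crossNumber B := by
  obtain ⟨l, rfl, hl, rfl⟩ := hk
  rw [← crossNumberHom_apply, map_multiset_sum]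
  simpa using Multiset.card_nsmul_le_sum (s := l.map crossNumberHom) (a := 1) fun q hq => by
    obtain ⟨A, hA, rfl⟩ := Multiset.mem_map.1 hq
    exact hS A (hl A hA)

/-- The zero-sum sequence `g ^ ord(g)`. -/
noncomputable def ordSeq (g : G) : Multiset G := Multiset.replicate (addOrderOf g) g

theorem isZeroSumSeq_ordSeq (hg : g ∈ S) : IsZeroSumSeq S (ordSeq g) :=
  ⟨fun _ hx => Multiset.eq_of_mem_replicate hx ▸ hg, by simp [ordSeq, addOrderOf_nsmul_eq_zero]⟩

theorem ordSeq_ne_zero (hg : IsOfFinAddOrder g) : ordSeq g ≠ 0 :=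
  Multiset.card_pos.1 (by simpa only [ordSeq, Multiset.card_replicate] using hg.addOrderOf_pos)

theorem weightHom_ordSeq {M : Type*} [AddCommMonoid M] (w : G → M) (g : G) :
    weightHom w (ordSeq g) = addOrderOf g • w g := by
  simp [weightHom, ordSeq]

theorem crossNumber_ordSeq (hg : IsOfFinAddOrder g) : crossNumber (ordSeq g) = 1 := by
  have h : (addOrderOf g : ℚ) ≠ 0 := by exact_mod_cast hg.addOrderOf_pos.ne'
  simp [crossNumber, ordSeq, h]

theorem isAtomSeq_ordSeq (hg : IsOfFinAddOrder g) (hgS : g ∈ S) : IsAtomSeq S (ordSeq g) := by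
  refine ⟨isZeroSumSeq_ordSeq hgS, ordSeq_ne_zero hg, fun X Y hX _ hX0 hY0 h => ?_⟩
  obtain ⟨k, -, rfl⟩ := Multiset.le_replicate_iff.1 (h ▸ le_self_add : X ≤ ordSeq g)
  have hk0 : 0 < k := by simpa only [Multiset.card_replicate] using Multiset.card_pos.2 hX0
  have hk : addOrderOf g ∣ k := by
    simpa [addOrderOf_dvd_iff_nsmul_eq_zero] using hX.2
  have hcard := congrArg Multiset.card h
  rw [ordSeq, Multiset.card_add, Multiset.card_replicate, Multiset.card_replicate] at hcard
  have := Multiset.card_pos.2 hY0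
  have := Nat.le_of_dvd hk0 hk
  omega

theorem IsAtomSeq.eq_ordSeq_of_le (hA : IsAtomSeq S A) (hg : IsOfFinAddOrder g)
    (hle : ordSeq g ≤ A) : A = ordSeq g :=
  hA.eq_of_le (isZeroSumSeq_ordSeq (hA.1.1 g (Multiset.mem_of_le hle
    (Multiset.mem_replicate.2 ⟨hg.addOrderOf_pos.ne', rfl⟩)))) (ordSeq_ne_zero hg) hle

theorem IsAtomSeq.count_lt_addOrderOf [DecidableEq G] (hA : IsAtomSeq S A)
    (hg : IsOfFinAddOrder g) (hne : A ≠ ordSeq g) : A.count g < addOrderOf g := by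
  by_contra! h
  exact hne (hA.eq_ordSeq_of_le hg (Multiset.le_count_iff_replicate_le.1 h))

end CrossNumber

section UnitCrossNumber

variable {G : Type*} [AddCommGroup G] {S : Set G} {A B : Multiset G} {g : G}

/-- The submonoid of `ℬ(S)` generated by the atoms of cross number one. -/
def unitCrossSubmonoid (S : Set G) : AddSubmonoid (Multiset G) :=
  AddSubmonoid.closure {A | IsAtomSeq S A ∧ crossNumber A = 1}

/-- The submonoid of `ℬ(S)` generated by the atoms `g ^ ord(g)`, `g ∈ S`. -/
noncomputable def ordSubmonoid (S : Set G) : AddSubmonoid (Multiset G) :=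
  AddSubmonoid.closure (ordSeq '' S)

theorem ordSeq_mem_ordSubmonoid (hg : g ∈ S) : ordSeq g ∈ ordSubmonoid S :=
  AddSubmonoid.subset_closure ⟨g, hg, rfl⟩

theorem ordSubmonoid_le_unitCrossSubmonoid (hG : IsAddTorsion G) :
    ordSubmonoid S ≤ unitCrossSubmonoid S := by
  refine AddSubmonoid.closure_mono ?_
  rintro _ ⟨g, hg, rfl⟩
  exact ⟨isAtomSeq_ordSeq (hG g) hg, crossNumber_ordSeq (hG g)⟩

theorem exists_crossNumber_eq_of_mem_unitCrossSubmonoid (hA : A ∈ unitCrossSubmonoid S) :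
    ∃ k ∈ LengthSet S A, crossNumber A = k := by
  induction hA using AddSubmonoid.closure_induction with
  | mem A hA => exact ⟨1, hA.1.one_mem_lengthSet, by rw [hA.2, Nat.cast_one]⟩
  | zero => exact ⟨0, zero_mem_lengthSet_zero, by simp [crossNumber]⟩
  | add A B _ _ hA hB =>
    obtain ⟨m, hm, hAm⟩ := hA
    obtain ⟨n, hn, hBn⟩ := hB
    exact ⟨m + n, add_mem_lengthSet hm hn, by rw [crossNumber_add, hAm, hBn, Nat.cast_add]⟩

theorem unitCrossSubmonoid_le_zeroSumSubmonoid : unitCrossSubmonoid S ≤ zeroSumSubmonoid S :=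
  AddSubmonoid.closure_le.2 fun _ hA => hA.1.1

theorem IsAtomSeq.crossNumber_eq_one_of_mem (hA : IsAtomSeq S A)
    (hmem : A ∈ unitCrossSubmonoid S) : crossNumber A = 1 := by
  obtain ⟨l, hl, rfl⟩ := AddSubmonoid.exists_multiset_of_mem_closure hmem
  obtain ⟨U, hU⟩ := Multiset.exists_mem_of_ne_zero fun h : l = 0 => hA.2.1 (by simp [h])
  rw [hA.eq_of_le (hl U hU).1.1 (hl U hU).1.2.1 (Multiset.le_sum_of_mem hU), (hl U hU).2]

theorem IsZeroSumSeq.mem_unitCrossSubmonoid (hB : IsZeroSumSeq S B)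
    (h : ∀ A ≤ B, IsAtomSeq S A → crossNumber A = 1) : B ∈ unitCrossSubmonoid S := by
  obtain ⟨-, l, -, hl, rfl⟩ := hB.exists_mem_lengthSet
  exact AddSubmonoid.multiset_sum_mem _ l fun A hA =>
    AddSubmonoid.subset_closure ⟨hl A hA, h A (Multiset.le_sum_of_mem hA) (hl A hA)⟩

theorem exists_nsmul_mem_ordSubmonoid (hG : IsAddTorsion G) (hA : ∀ x ∈ A, x ∈ S) :
    ∃ N, 0 < N ∧ N • A ∈ ordSubmonoid S := by
  induction A using Multiset.induction_on with
  | empty => exact ⟨1, one_pos, by simp⟩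
  | cons a A ih =>
    obtain ⟨N, hN, hmem⟩ := ih fun x hx => hA x (Multiset.mem_cons_of_mem hx)
    refine ⟨N * addOrderOf a, Nat.mul_pos hN (hG a).addOrderOf_pos, ?_⟩
    have hsplit : (N * addOrderOf a) • (a ::ₘ A) = N • ordSeq a + addOrderOf a • N • A := by
      rw [← Multiset.singleton_add, nsmul_add, Multiset.nsmul_singleton, mul_nsmul',
        smul_comm N, ordSeq, Multiset.nsmul_replicate]
    rw [hsplit]
    exact add_mem (nsmul_mem (ordSeq_mem_ordSubmonoid (hA a (Multiset.mem_cons_self a A))) N)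
      (nsmul_mem hmem _)

theorem IsAtomSeq.crossNumber_eq_one (hG : IsAddTorsion G) (hS : DeltaSet S = ∅)
    (hA : IsAtomSeq S A) : crossNumber A = 1 := by
  obtain ⟨N, hN, hmem⟩ := exists_nsmul_mem_ordSubmonoid hG hA.1.1
  obtain ⟨k, hk, hkN⟩ := exists_crossNumber_eq_of_mem_unitCrossSubmonoid
    (ordSubmonoid_le_unitCrossSubmonoid hG hmem)
  have huniq {x y : ℕ} (hx : x ∈ LengthSet S (N • A)) (hy : y ∈ LengthSet S (N • A)) : y ≤ x := by
    by_contra! hxy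
    obtain ⟨d, hd, -⟩ := exists_mem_deltaSet_le hx hy hxy
    exact hS.subset hd
  have hNk : k = N :=
    (huniq (hA.mem_lengthSet_nsmul N) hk).antisymm (huniq hk (hA.mem_lengthSet_nsmul N))
  have hN0 : (N : ℚ) ≠ 0 := by exact_mod_cast hN.ne'
  rwa [crossNumber_nsmul, hNk, mul_eq_left₀ hN0] at hkN

theorem deltaSet_eq_empty_of_crossNumber_eq_one (h : ∀ A, IsAtomSeq S A → crossNumber A = 1) :
    DeltaSet S = ∅ := by
  refine Set.eq_empty_of_forall_notMem fun d hd => (pos_of_mem_deltaSet hd).ne' ?_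
  have := addOrderOf_dvd_of_mem_deltaSet (φ := crossNumberHom) h hd
  rwa [addOrderOf_eq_zero (not_isOfFinAddOrder_of_isAddTorsionFree one_ne_zero),
    zero_dvd_iff] at this

end UnitCrossNumber

section SumOrdSeq

variable {G : Type*} [AddCommGroup G] (s : Finset G)

theorem card_mem_lengthSet_sum_ordSeq (hG : IsAddTorsion G) :
    s.card ∈ LengthSet (s : Set G) (∑ g ∈ s, ordSeq g) := by
  refine ⟨s.val.map ordSeq, by simp, fun A hA => ?_, rfl⟩
  obtain ⟨g, hg, rfl⟩ := Multiset.mem_map.1 hA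
  exact isAtomSeq_ordSeq (hG g) hg

theorem crossNumber_sum_ordSeq (hG : IsAddTorsion G) :
    crossNumber (∑ g ∈ s, ordSeq g) = s.card := by
  rw [← crossNumberHom_apply, map_sum]
  simp only [crossNumberHom_apply, crossNumber_ordSeq (hG _), Finset.sum_const, nsmul_one]

theorem IsAtomSeq.lt_sum_ordSeq {s : Finset G} {A : Multiset G} (hG : IsAddTorsion G)
    (hA : IsAtomSeq (s : Set G) A) (hk : crossNumber A ≠ 1) : A < ∑ g ∈ s, ordSeq g := by
  classical
  have hcount {g : G} (hg : g ∈ A) : A.count g < (∑ g ∈ s, ordSeq g).count g :=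
    (hA.count_lt_addOrderOf (hG g) fun h => hk (h ▸ crossNumber_ordSeq (hG g))).trans_le <|
      Multiset.le_count_iff_replicate_le.2 <|
      Finset.single_le_sum (f := ordSeq) (fun _ _ => Multiset.zero_le _) (hA.1.1 g hg)
  obtain ⟨g, hg⟩ := Multiset.exists_mem_of_ne_zero hA.2.1
  refine lt_of_le_of_ne (Multiset.le_iff_count.2 fun g => ?_) fun h => (hcount hg).ne (by rw [← h])
  by_cases hg : g ∈ A
  · exact (hcount hg).le
  · simp only [Multiset.count_eq_zero_of_notMem hg, Nat.zero_le]

end SumOrdSeq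

section MinNonHalfFactorial

variable {G : Type*} [AddCommGroup G] {S : Set G} {A B : Multiset G} {g : G}

namespace IsMinNonHalfFactorial

theorem exists_crossNumber_ne_one (hS : IsMinNonHalfFactorial S) :
    ∃ W, IsAtomSeq S W ∧ crossNumber W ≠ 1 := by
  by_contra! h
  exact hS.1.ne_empty (deltaSet_eq_empty_of_crossNumber_eq_one h)

theorem mem_of_crossNumber_ne_one (hS : IsMinNonHalfFactorial S) (hG : IsAddTorsion G)
    (hA : IsAtomSeq S A) (hk : crossNumber A ≠ 1) (hg : g ∈ S) : g ∈ A := by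
  by_contra hgA
  have hss : S \ {g} ⊂ S := Set.sdiff_singleton_ssubset.2 hg
  have hA' : IsAtomSeq (S \ {g}) A :=
    hA.of_forall_mem fun x hx => ⟨hA.1.1 x hx, fun h : x = g => hgA (h ▸ hx)⟩
  exact hk (hA'.crossNumber_eq_one hG (hS.2 _ hss))

theorem mem_unitCrossSubmonoid_of_notMem (hS : IsMinNonHalfFactorial S) (hG : IsAddTorsion G)
    (hB : IsZeroSumSeq S B) (hg : g ∈ S) (hgB : g ∉ B) : B ∈ unitCrossSubmonoid S :=
  hB.mem_unitCrossSubmonoid fun A hAB hA => by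
    by_contra hk
    exact hgB (Multiset.mem_of_le hAB (hS.mem_of_crossNumber_ne_one hG hA hk hg))

theorem sInf_deltaSet_add_two_le_card {s : Finset G}
    (hs : IsMinNonHalfFactorial (s : Set G)) (hG : IsAddTorsion G) (hLCN : IsLCNSet (s : Set G)) :
    sInf (DeltaSet (s : Set G)) + 2 ≤ s.card := by
  obtain ⟨W, hW, hWk⟩ := hs.exists_crossNumber_ne_one
  have hPlen := card_mem_lengthSet_sum_ordSeq s hG
  have hPk := crossNumber_sum_ordSeq s hG
  have hlt := hW.lt_sum_ordSeq hG hWk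
  generalize ∑ g ∈ s, ordSeq g = P at hPlen hPk hlt
  obtain ⟨T, rfl⟩ := Multiset.le_iff_exists_add.1 hlt.le
  obtain ⟨c, hc⟩ := (hW.1.right_of_add (.of_mem_lengthSet hPlen)).exists_mem_lengthSet
  have hc0 : 0 < c := pos_of_mem_lengthSet hc (pos_iff_ne_zero.1 (lt_add_iff_pos_right W |>.1 hlt))
  have hcs : 1 + c < s.card := by
    have hW1 : 1 < crossNumber W := lt_of_le_of_ne (hLCN W hW) hWk.symm
    have hcT : (c : ℚ) ≤ crossNumber T := hLCN.le_crossNumber hc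
    rw [crossNumber_add] at hPk
    have : ((1 + c : ℕ) : ℚ) < s.card := by push_cast; linarith
    exact_mod_cast this
  have := add_sInf_deltaSet_le (add_mem_lengthSet hW.one_mem_lengthSet hc) hPlen hcs
  omega

end IsMinNonHalfFactorial

end MinNonHalfFactorial

section Multiplicities

variable {G κ : Type*} [Fintype κ] {u : κ → G}

theorem count_sum_nsmul_singleton [DecidableEq G] (hu : u.Injective) (f : κ → ℕ) (j : κ) :
    (∑ k, f k • ({u k} : Multiset G)).count (u j) = f j := by
  classical
  simp [Multiset.count_sum', Multiset.count_nsmul, Multiset.count_singleton, hu.eq_iff]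

theorem sum_count_nsmul_singleton [DecidableEq G] (hu : u.Injective) {A : Multiset G}
    (hA : ∀ x ∈ A, x ∈ Set.range u) : ∑ k, A.count (u k) • ({u k} : Multiset G) = A := by
  ext x
  by_cases hx : x ∈ Set.range u
  · obtain ⟨j, rfl⟩ := hx
    exact count_sum_nsmul_singleton hu _ j
  · rw [Multiset.count_eq_zero_of_notMem fun h => hx (hA x h), Multiset.count_sum']
    refine Finset.sum_eq_zero fun k _ => ?_
    rw [Multiset.count_nsmul, Multiset.count_singleton, if_neg fun h => hx ⟨k, h.symm⟩, mul_zero]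

theorem sum_count_nsmul_apply [DecidableEq G] {M : Type*} [AddCommMonoid M] (hu : u.Injective)
    {A : Multiset G} (hA : ∀ x ∈ A, x ∈ Set.range u) (w : G → M) :
    ∑ k, A.count (u k) • w (u k) = weightHom w A := by
  conv_rhs => rw [← sum_count_nsmul_singleton hu hA]
  simp [weightHom, map_sum, _root_.map_nsmul]

theorem sum_count_nsmul [DecidableEq G] [AddCommMonoid G] (hu : u.Injective)
    {A : Multiset G} (hA : ∀ x ∈ A, x ∈ Set.range u) : ∑ k, A.count (u k) • u k = A.sum := by
  simpa [weightHom] using sum_count_nsmul_apply hu hA id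

theorem isZeroSumSeq_sum_nsmul_singleton [AddCommGroup G] {f : κ → ℕ}
    (hf : ∑ k, f k • u k = 0) :
    IsZeroSumSeq (Set.range u) (∑ k, f k • ({u k} : Multiset G)) := by
  refine ⟨fun x hx => ?_, by simpa [Multiset.sum_sum, Multiset.sum_nsmul] using hf⟩
  obtain ⟨k, -, hk⟩ := Multiset.mem_sum.1 hx
  exact ⟨k, (Multiset.mem_singleton.1 (Multiset.mem_of_mem_nsmul hk)).symm⟩

end Multiplicities

section Relations

variable {R M ι : Type*} [CommRing R] [AddCommGroup M] [Module R M] [Fintype ι]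

variable (R) in
/-- The lattice of linear relations satisfied by a finite family `v`. -/
def relations (v : ι → M) : Submodule R (ι → R) :=
  LinearMap.ker (Fintype.linearCombination R v)

theorem mem_relations {v : ι → M} {x : ι → R} : x ∈ relations R v ↔ ∑ i, x i • v i = 0 := by
  rw [relations, LinearMap.mem_ker, Fintype.linearCombination_apply]

/-- The submodule spanned by those vectors of `Λ` that lie in some coordinate hyperplane. -/
def degenerateSpan (Λ : Submodule R (ι → R)) : Submodule R (ι → R) :=
  Submodule.span R {x | x ∈ Λ ∧ ∃ i, x i = 0}

end Relations

section CountVec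

variable {G : Type*} [DecidableEq G] {s : Finset G} {A B : Multiset G}

/-- The multiplicities of a sequence at the points of `s`, as an integer vector. -/
def countVec (s : Finset G) : Multiset G →+ (s → ℤ) :=
  AddMonoidHom.pi fun g => (Nat.castAddMonoidHom ℤ).comp (Multiset.countAddMonoidHom (g : G))

theorem countVec_apply (A : Multiset G) (g : s) : countVec s A g = A.count (g : G) := rfl

theorem eq_of_countVec_eq (hA : ∀ x ∈ A, x ∈ s) (hB : ∀ x ∈ B, x ∈ s)
    (h : countVec s A = countVec s B) : A = B := by
  ext g
  by_cases hg : g ∈ s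
  · simpa only [countVec_apply, Nat.cast_inj] using congrFun h ⟨g, hg⟩
  · rw [Multiset.count_eq_zero_of_notMem fun h => hg (hA g h),
      Multiset.count_eq_zero_of_notMem fun h => hg (hB g h)]

variable [AddCommGroup G]

theorem IsZeroSumSeq.countVec_mem_relations (hA : IsZeroSumSeq (s : Set G) A) :
    countVec s A ∈ relations ℤ ((↑) : s → G) := by
  have hrange : ∀ x ∈ A, x ∈ Set.range ((↑) : s → G) := by
    rw [Subtype.range_coe]
    exact hA.1
  rw [mem_relations, ← hA.2, ← sum_count_nsmul Subtype.val_injective hrange]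
  simp only [countVec_apply, natCast_zsmul]

namespace IsMinNonHalfFactorial

variable {x : s → ℤ}

/-- Adding a multiple of `g ^ ord(g)` for each `g ≠ h` makes the entries of `x` nonnegative without
bringing `h` into the support. -/
theorem exists_add_countVec_eq_of_apply_eq_zero (hs : IsMinNonHalfFactorial (s : Set G))
    (hG : IsAddTorsion G) (hx : x ∈ relations ℤ ((↑) : s → G)) {h : s} (hxh : x h = 0) :
    ∃ O ∈ ordSubmonoid (s : Set G), ∃ A ∈ unitCrossSubmonoid (s : Set G),
      x + countVec s O = countVec s A := by
  let O : Multiset G := ∑ g : s, (x g).natAbs • ordSeq (g : G)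
  let f : s → ℕ := fun g => (x g + (x g).natAbs * addOrderOf (g : G)).toNat
  have hf (g : s) : (f g : ℤ) = x g + (x g).natAbs * addOrderOf (g : G) := by
    refine Int.toNat_of_nonneg ?_
    have hg : (1 : ℤ) ≤ addOrderOf (g : G) := by exact_mod_cast (hG g).addOrderOf_pos
    have habs : -x g ≤ (x g).natAbs := by omega
    nlinarith [Int.natCast_nonneg (x g).natAbs]
  have hfsum : ∑ g : s, f g • (g : G) = 0 := by
    rw [← mem_relations.1 hx]
    refine Finset.sum_congr rfl fun g _ => ?_
    rw [← natCast_zsmul, hf, add_smul, mul_smul, natCast_zsmul (g : G), addOrderOf_nsmul_eq_zero,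
      smul_zero, add_zero]
  have hzero := isZeroSumSeq_sum_nsmul_singleton hfsum
  rw [Subtype.range_coe] at hzero
  refine ⟨O, sum_mem fun g _ => nsmul_mem (ordSeq_mem_ordSubmonoid g.2) _, _,
    hs.mem_unitCrossSubmonoid_of_notMem hG hzero h.2 ?_, ?_⟩
  · rw [← Multiset.count_eq_zero, count_sum_nsmul_singleton Subtype.val_injective]
    simp [f, hxh]
  · ext g
    have hO : O.count (g : G) = (x g).natAbs * addOrderOf (g : G) := by
      simpa [O, ordSeq, Multiset.nsmul_replicate, Multiset.nsmul_singleton] using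
        count_sum_nsmul_singleton (Subtype.val_injective (p := (· ∈ s)))
          (fun g => (x g).natAbs * addOrderOf (g : G)) g
    rw [Pi.add_apply, countVec_apply, countVec_apply,
      count_sum_nsmul_singleton Subtype.val_injective, hf, hO, Nat.cast_mul]

theorem exists_add_countVec_eq_of_mem_degenerateSpan (hs : IsMinNonHalfFactorial (s : Set G))
    (hG : IsAddTorsion G) (hx : x ∈ degenerateSpan (relations ℤ ((↑) : s → G))) :
    ∃ O ∈ ordSubmonoid (s : Set G), ∃ A ∈ unitCrossSubmonoid (s : Set G),
      x + countVec s O = countVec s A := by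
  rw [degenerateSpan, ← Submodule.mem_toAddSubgroup, Submodule.span_int_eq_addSubgroupClosure] at hx
  induction hx using AddSubgroup.closure_induction with
  | mem x hx =>
    obtain ⟨hx, h, hxh⟩ := hx
    exact hs.exists_add_countVec_eq_of_apply_eq_zero hG hx hxh
  | zero => exact ⟨0, zero_mem _, 0, zero_mem _, add_zero _⟩
  | add x y _ _ hx hy =>
    obtain ⟨O, hO, A, hA, hOA⟩ := hx
    obtain ⟨P, hP, B, hB, hPB⟩ := hy
    exact ⟨O + P, add_mem hO hP, A + B, add_mem hA hB, by
      rw [_root_.map_add, _root_.map_add, add_add_add_comm, hOA, hPB]⟩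
  | neg x _ hx =>
    obtain ⟨O, hO, A, hA, hOA⟩ := hx
    obtain ⟨N, hN, hNA⟩ :=
      exists_nsmul_mem_ordSubmonoid hG (unitCrossSubmonoid_le_zeroSumSubmonoid hA).1
    refine ⟨N • A, hNA, O + (N - 1) • A,
      add_mem (ordSubmonoid_le_unitCrossSubmonoid hG hO) (nsmul_mem hA _), ?_⟩
    obtain ⟨n, rfl⟩ := Nat.exists_eq_add_one.2 hN
    rw [_root_.map_add, Nat.add_sub_cancel, succ_nsmul, _root_.map_add, ← hOA]
    abel

end IsMinNonHalfFactorial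

end CountVec

section Cancellation

variable {G : Type*} [AddCommGroup G] {S : Set G} {s : Finset G} {B W O : Multiset G} {g : G}
  {d : ℕ}

theorem exists_mem_add_le_sum {α : Type*} {l : Multiset α} {f : α → ℕ} {N : ℕ}
    (hl : 2 ≤ l.card) (hN : N ≤ l.card) (hsum : N < (l.map f).sum) :
    ∃ a ∈ l, f a + N ≤ (l.map f).sum := by
  by_contra! h
  obtain ⟨t, ht⟩ := Nat.exists_eq_add_of_lt hsum
  have hle : (l.map f).card • (t + 2) ≤ (l.map f).sum :=
    Multiset.card_nsmul_le_sum fun m hm => by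
      obtain ⟨a, ha, rfl⟩ := Multiset.mem_map.1 hm
      have := h a ha
      omega
  rw [Multiset.card_map, smul_eq_mul] at hle
  nlinarith

theorem exists_cons_replicate_le_sum {α : Type*} [DecidableEq α] {l : Multiset (Multiset α)} {a : α}
    {N : ℕ} (hl : 2 ≤ l.card) (hN : N ≤ l.card) (hsum : N < l.sum.count a) :
    ∃ A l', l = A ::ₘ l' ∧ Multiset.replicate N a ≤ l'.sum := by
  rw [← Multiset.coe_countAddMonoidHom, map_multiset_sum] at hsum
  obtain ⟨A, hA, hle⟩ := exists_mem_add_le_sum hl hN hsum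
  obtain ⟨l', rfl⟩ := Multiset.exists_cons_of_mem hA
  rw [Multiset.map_cons, Multiset.sum_cons] at hle
  refine ⟨A, l', rfl, Multiset.le_count_iff_replicate_le.1 ?_⟩
  rw [← Multiset.coe_countAddMonoidHom, map_multiset_sum]
  exact le_of_add_le_add_left hle

theorem add_two_le_card_of_sum_eq_add_ordSeq {l : Multiset (Multiset G)} {W : Multiset G}
    (hg : IsOfFinAddOrder g) (hl : ∀ A ∈ l, crossNumber A = 1) (hlB : l.sum = B + ordSeq g)
    (hWB : W ≤ B) (hdW : (d + 1 : ℚ) ≤ crossNumber W) : d + 2 ≤ l.card := by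
  have hcard := crossNumber_sum_eq_card hl
  obtain ⟨C, rfl⟩ := Multiset.le_iff_exists_add.1 hWB
  rw [hlB, crossNumber_add, crossNumber_add, crossNumber_ordSeq hg] at hcard
  have hC := crossNumber_nonneg C
  have : ((d + 2 : ℕ) : ℚ) ≤ l.card := by push_cast; linarith
  exact_mod_cast this

/-- Were `B` outside the submonoid, an atom `W ∣ B` of large cross number would make the number of
atoms in a factorization of `B g ^ ord(g)` so large that one of them can be split off without
losing the factor `g ^ ord(g)`. -/
theorem IsZeroSumSeq.mem_unitCrossSubmonoid_of_add_ordSeq (hB : IsZeroSumSeq S B)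
    (hbad : ∀ W, IsAtomSeq S W → crossNumber W ≠ 1 → (d + 1 : ℚ) ≤ crossNumber W ∧ g ∈ W)
    (hg : IsOfFinAddOrder g) (hgd : addOrderOf g ≤ d + 2)
    (hmem : B + ordSeq g ∈ unitCrossSubmonoid S) : B ∈ unitCrossSubmonoid S := by
  classical
  obtain ⟨l, hl, hlB⟩ := AddSubmonoid.exists_multiset_of_mem_closure hmem
  clear hmem
  induction hn : l.card generalizing l B with
  | zero =>
    rw [Multiset.card_eq_zero.1 hn, Multiset.sum_zero] at hlB
    exact absurd (add_eq_zero.1 hlB.symm).2 (ordSeq_ne_zero hg)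
  | succ n ih =>
    by_contra hBmem
    obtain ⟨W, hWB, hW, hWk⟩ : ∃ W ≤ B, IsAtomSeq S W ∧ crossNumber W ≠ 1 := by
      by_contra! h
      exact hBmem (hB.mem_unitCrossSubmonoid h)
    obtain ⟨hdW, hgW⟩ := hbad W hW hWk
    have hcard := add_two_le_card_of_sum_eq_add_ordSeq hg (fun A hA => (hl A hA).2) hlB hWB hdW
    have hcount : addOrderOf g < l.sum.count g := by
      have hgB : 0 < B.count g := Multiset.count_pos.2 (Multiset.mem_of_le hWB hgW)
      rw [hlB, Multiset.count_add, ordSeq, Multiset.count_replicate_self]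
      omega
    obtain ⟨A, l', rfl, hgl'⟩ :=
      exists_cons_replicate_le_sum (le_of_add_le_right hcard) (hgd.trans hcard) hcount
    have hA := hl A (Multiset.mem_cons_self A l')
    have hl' : ∀ A ∈ l', IsAtomSeq S A ∧ crossNumber A = 1 := fun A hA =>
      hl A (Multiset.mem_cons_of_mem hA)
    obtain ⟨B', hB'⟩ := Multiset.le_iff_exists_add.1 hgl'
    rw [add_comm, ← ordSeq] at hB'
    rw [Multiset.sum_cons, hB', ← add_assoc, add_left_inj] at hlB
    have hgS : g ∈ S := hW.1.1 g hgW
    have hB'S : IsZeroSumSeq S B' := (isZeroSumSeq_ordSeq hgS).right_of_add <| by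
      rw [add_comm, ← hB']
      exact (zeroSumSubmonoid S).multiset_sum_mem l' fun A hA => (hl' A hA).1.1
    have hB'mem := ih hB'S l' hl' hB' (by simpa using hn)
    exact hBmem (hlB ▸ add_mem (AddSubmonoid.subset_closure hA) hB'mem)

namespace IsMinNonHalfFactorial

theorem exists_add_mem_unitCrossSubmonoid (hs : IsMinNonHalfFactorial (s : Set G))
    (hG : IsAddTorsion G)
    (hΛ : relations ℤ ((↑) : s → G) ≤ degenerateSpan (relations ℤ ((↑) : s → G)))
    (hB : IsZeroSumSeq (s : Set G) B) :
    ∃ O ∈ ordSubmonoid (s : Set G), B + O ∈ unitCrossSubmonoid (s : Set G) := by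
  classical
  obtain ⟨O, hO, A, hA, hBOA⟩ :=
    hs.exists_add_countVec_eq_of_mem_degenerateSpan hG (hΛ hB.countVec_mem_relations)
  have hO' := unitCrossSubmonoid_le_zeroSumSubmonoid (ordSubmonoid_le_unitCrossSubmonoid hG hO)
  have hA' := unitCrossSubmonoid_le_zeroSumSubmonoid hA
  rw [← _root_.map_add] at hBOA
  exact ⟨O, hO, eq_of_countVec_eq (hB.add hO').1 hA'.1 hBOA ▸ hA⟩

theorem sInf_deltaSet_add_one_le_crossNumber (hG : IsAddTorsion G) (hLCN : IsLCNSet S)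
    (hW : IsAtomSeq S W) (hk : crossNumber W ≠ 1) (hO : O ∈ ordSubmonoid S)
    (hWO : W + O ∈ unitCrossSubmonoid S) :
    (sInf (DeltaSet S) + 1 : ℚ) ≤ crossNumber W := by
  obtain ⟨a, ha, haW⟩ := exists_crossNumber_eq_of_mem_unitCrossSubmonoid hWO
  obtain ⟨o, ho, hoO⟩ := exists_crossNumber_eq_of_mem_unitCrossSubmonoid
    (ordSubmonoid_le_unitCrossSubmonoid hG hO)
  rw [crossNumber_add, hoO] at haW
  have hlt : 1 + o < a := by
    have hW1 : 1 < crossNumber W := lt_of_le_of_ne (hLCN W hW) hk.symm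
    have : ((1 + o : ℕ) : ℚ) < a := by push_cast; linarith
    exact_mod_cast this
  have hle : ((1 + o + sInf (DeltaSet S) : ℕ) : ℚ) ≤ a := by
    exact_mod_cast add_sInf_deltaSet_le (add_mem_lengthSet hW.one_mem_lengthSet ho) ha hlt
  push_cast at hle
  linarith

theorem not_relations_le_degenerateSpan (hs : IsMinNonHalfFactorial (s : Set G))
    (hG : IsAddTorsion G) (hLCN : IsLCNSet (s : Set G))
    (hord : ∀ g ∈ s, addOrderOf g ≤ sInf (DeltaSet (s : Set G)) + 2) :
    ¬ relations ℤ ((↑) : s → G) ≤ degenerateSpan (relations ℤ ((↑) : s → G)) := by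
  intro hΛ
  have hbad {g : G} (hg : g ∈ s) (W : Multiset G) (hW : IsAtomSeq (s : Set G) W)
      (hk : crossNumber W ≠ 1) :
      (sInf (DeltaSet (s : Set G)) + 1 : ℚ) ≤ crossNumber W ∧ g ∈ W := by
    obtain ⟨O, hO, hWO⟩ := hs.exists_add_mem_unitCrossSubmonoid hG hΛ hW.1
    exact ⟨sInf_deltaSet_add_one_le_crossNumber hG hLCN hW hk hO hWO,
      hs.mem_of_crossNumber_ne_one hG hW hk hg⟩
  have hcancel {O : Multiset G} (hO : O ∈ ordSubmonoid (s : Set G)) {B : Multiset G}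
      (hB : IsZeroSumSeq (s : Set G) B) (hBO : B + O ∈ unitCrossSubmonoid (s : Set G)) :
      B ∈ unitCrossSubmonoid (s : Set G) := by
    induction hO using AddSubmonoid.closure_induction generalizing B with
    | mem _ hg =>
      obtain ⟨g, hg, rfl⟩ := hg
      exact hB.mem_unitCrossSubmonoid_of_add_ordSeq (hbad hg) (hG g) (hord g hg) hBO
    | zero => rwa [add_zero] at hBO
    | add O P hO _ ihO ihP =>
      rw [← add_assoc] at hBO
      exact ihO hB (ihP (hB.add (unitCrossSubmonoid_le_zeroSumSubmonoid
        (ordSubmonoid_le_unitCrossSubmonoid hG hO))) hBO)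
  obtain ⟨W, hW, hWk⟩ := hs.exists_crossNumber_ne_one
  obtain ⟨O, hO, hWO⟩ := hs.exists_add_mem_unitCrossSubmonoid hG hΛ hW.1
  exact hWk (hW.crossNumber_eq_one_of_mem (hcancel hO hW.1 hWO))

end IsMinNonHalfFactorial

end Cancellation

section Lattice

variable {R M ι : Type*} [CommRing R] [AddCommGroup M] [Module R M] {Λ : Submodule R (ι → R)}
  {x y z : ι → R} {i j : ι}

theorem mem_degenerateSpan_of_apply_eq_zero (hx : x ∈ Λ) (hxi : x i = 0) : x ∈ degenerateSpan Λ :=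
  Submodule.subset_span ⟨hx, i, hxi⟩

theorem degenerateSpan_le : degenerateSpan Λ ≤ Λ :=
  Submodule.span_le.2 fun _ hx => hx.1

theorem sub_smul_mem_degenerateSpan {a : R} (hx : x ∈ Λ) (hz : z ∈ Λ) (ha : x i = z i * a) :
    x - a • z ∈ degenerateSpan Λ :=
  mem_degenerateSpan_of_apply_eq_zero (i := i) (sub_mem hx (Λ.smul_mem a hz)) <| by
    rw [Pi.sub_apply, Pi.smul_apply, smul_eq_mul, ha, mul_comm, sub_self]

variable (Λ i) in
theorem exists_forall_apply_dvd [IsPrincipalIdealRing R] : ∃ z ∈ Λ, ∀ x ∈ Λ, z i ∣ x i := by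
  let I : Ideal R := Λ.map (LinearMap.proj i)
  obtain ⟨z, hz, hzi⟩ := Submodule.mem_map.1 (Submodule.IsPrincipal.generator_mem I)
  refine ⟨z, hz, fun x hx => ?_⟩
  rw [show z i = Submodule.IsPrincipal.generator I from hzi]
  exact (Submodule.IsPrincipal.mem_iff_generator_dvd I).1 (Submodule.mem_map_of_mem hx)

theorem mul_dvd_apply_of_mem_degenerateSpan {c : R} (hz : z ∈ Λ) (hdvd : ∀ x ∈ Λ, z i ∣ x i)
    (hy : y ∈ Λ) (hc : ∀ t : R, t • y ∈ degenerateSpan Λ → c ∣ t) (hx : x ∈ degenerateSpan Λ) :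
    c * z i ∣ x i := by
  obtain ⟨a, ha⟩ := hdvd x (degenerateSpan_le hx)
  obtain ⟨b, hb⟩ := hdvd y hy
  have haz : a • z ∈ degenerateSpan Λ := by
    simpa only [sub_sub_cancel] using
      sub_mem hx (sub_smul_mem_degenerateSpan (degenerateSpan_le hx) hz ha)
  have hay : a • y ∈ degenerateSpan Λ := by
    have hsplit : a • y = a • (y - b • z) + b • a • z := by
      rw [smul_sub, smul_comm b a, sub_add_cancel]
    rw [hsplit]
    exact add_mem (Submodule.smul_mem _ _ (sub_smul_mem_degenerateSpan hy hz hb))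
      (Submodule.smul_mem _ _ haz)
  rw [ha, mul_comm]
  exact mul_dvd_mul_left _ (hc a hay)

/-- Modulo `degenerateSpan Λ`, every `x ∈ Λ` is a multiple of `z i`, where `z i ∈ Λ` generates the
projection to the coordinate `i`. So the quotient is cyclic, and `c` generates the annihilator of
any of its generators `y`. -/
theorem exists_mul_dvd_sub_of_not_le_degenerateSpan [IsPrincipalIdealRing R]
    (hΛ : ¬ Λ ≤ degenerateSpan Λ) :
    ∃ c : R, ¬ IsUnit c ∧ ∃ m : ι → R, (∀ i, m i ≠ 0) ∧ (∀ x ∈ Λ, ∀ i, m i ∣ x i) ∧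
      ∃ y ∈ Λ, ∀ x ∈ Λ, ∃ t, ∀ i, c * m i ∣ x i - t * y i := by
  choose z hz hdvd using exists_forall_apply_dvd Λ
  obtain ⟨x₀, hx₀, hx₀'⟩ := SetLike.not_le_iff_exists.1 hΛ
  have hm (i) : z i i ≠ 0 := fun h0 =>
    hx₀' (mem_degenerateSpan_of_apply_eq_zero hx₀ (zero_dvd_iff.1 (h0 ▸ hdvd i x₀ hx₀)))
  obtain ⟨i₀⟩ : Nonempty ι := by
    by_contra h
    rw [not_nonempty_iff] at h
    exact hx₀' (Subsingleton.elim x₀ 0 ▸ zero_mem _)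
  let y := z i₀
  let J : Ideal R := (degenerateSpan Λ).comap (LinearMap.toSpanSingleton R (ι → R) y)
  let c := Submodule.IsPrincipal.generator J
  have hc (t : R) : t • y ∈ degenerateSpan Λ ↔ c ∣ t :=
    Submodule.IsPrincipal.mem_iff_generator_dvd J
  have hdecomp {x : ι → R} (hx : x ∈ Λ) : ∃ t : R, x - t • y ∈ degenerateSpan Λ := by
    obtain ⟨t, ht⟩ := hdvd i₀ x hx
    exact ⟨t, sub_smul_mem_degenerateSpan hx (hz i₀) ht⟩
  refine ⟨c, fun hunit => hx₀' ?_, fun i => z i i, hm, fun x hx i => hdvd i x hx, y, hz i₀,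
    fun x hx => ?_⟩
  · obtain ⟨t, ht⟩ := hdecomp hx₀
    simpa only [sub_add_cancel] using add_mem ht ((hc t).2 hunit.dvd)
  · obtain ⟨t, ht⟩ := hdecomp hx
    exact ⟨t, fun i => mul_dvd_apply_of_mem_degenerateSpan (hz i) (hdvd i) (hz i₀)
      (fun t => (hc t).1) ht⟩

/-- Replacing each `v i` by its multiple `m i • v i` divides the `i`-th coordinate of every relation
by `m i`. -/
theorem exists_relations_dvd_sub_of_not_le_degenerateSpan [Fintype ι] [IsDomain R]
    [IsPrincipalIdealRing R] {v : ι → M} (hv : ¬ relations R v ≤ degenerateSpan (relations R v)) :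
    ∃ c : R, ¬ IsUnit c ∧ ∃ (w : ι → M) (y : ι → R), ∀ x ∈ relations R w,
      ∃ t, ∀ i, c ∣ x i - t * y i := by
  obtain ⟨c, hc, m, hm, hdvd, y, hy, h⟩ := exists_mul_dvd_sub_of_not_le_degenerateSpan hv
  choose y' hy' using hdvd y hy
  refine ⟨c, hc, fun i => m i • v i, y', fun x hx => ?_⟩
  have hmx : (fun i => m i * x i) ∈ relations R v := by
    simpa only [mem_relations, mul_comm (m _), mul_smul] using mem_relations.1 hx
  obtain ⟨t, ht⟩ := h _ hmx
  refine ⟨t, fun i => (mul_dvd_mul_iff_right (hm i)).1 ?_⟩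
  convert ht i using 1
  rw [hy']
  ring

theorem relations_le_degenerateSpan_of_mem_span [Fintype ι] {v : ι → M} (hij : j ≠ i)
    (hi : v i ∈ Submodule.span R (v '' {i, j}ᶜ)) :
    relations R v ≤ degenerateSpan (relations R v) := by
  classical
  obtain ⟨l, hl, hlv⟩ := (Finsupp.mem_span_image_iff_linearCombination R).1 hi
  have hl0 (k : ι) (hk : k ∈ ({i, j} : Set ι)) : l k = 0 := by
    by_contra h
    exact (Finsupp.mem_supported R l).1 hl (Finsupp.mem_support_iff.2 h) hk
  let y : ι → R := Pi.single i 1 - ⇑l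
  have hyi : y i = 1 := by simp [y, hl0 i (Or.inl rfl)]
  have hyj : y j = 0 := by simp [y, hl0 j (Or.inr rfl), hij]
  have hy : y ∈ relations R v := by
    rw [Finsupp.linearCombination_apply, Finsupp.sum_fintype _ _ fun k => zero_smul R (v k)] at hlv
    simp [mem_relations, y, sub_smul, hlv, Pi.single_apply]
  intro x hx
  simpa only [sub_add_cancel] using
    add_mem (sub_smul_mem_degenerateSpan (a := x i) hx hy (by rw [hyi, one_mul]))
      (Submodule.smul_mem _ (x i) (mem_degenerateSpan_of_apply_eq_zero hy hyj))

theorem relations_le_degenerateSpan_of_mem_closure {G : Type*} [AddCommGroup G] {s : Finset G}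
    {h h' : G} (hs : h ∈ s) (hs' : h' ∈ s) (hne : h' ≠ h)
    (hmem : h ∈ AddSubgroup.closure (↑s \ {h, h'})) :
    relations ℤ ((↑) : s → G) ≤ degenerateSpan (relations ℤ ((↑) : s → G)) := by
  refine relations_le_degenerateSpan_of_mem_span (i := ⟨h, hs⟩) (j := ⟨h', hs'⟩)
    (fun h => hne (congrArg Subtype.val h)) ?_
  rw [← Submodule.mem_toAddSubgroup, Submodule.span_int_eq_addSubgroupClosure]
  refine AddSubgroup.closure_mono ?_ hmem
  rintro x ⟨hx, hxh⟩
  exact ⟨⟨x, hx⟩, by simpa [Subtype.ext_iff] using hxh, rfl⟩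

end Lattice

section Rank

variable {A G V ι : Type*} [AddCommGroup A] [AddCommGroup G] [Finite G] [AddCommGroup V] {p : ℕ}

theorem card_le_card_torsion_of_ker_le (f : A →+ G) {π : A →+ V} (hπ : Function.Surjective π)
    (hker : f.ker ≤ π.ker) (hp : ∀ v : V, p • v = 0) :
    Nat.card V ≤ Nat.card {x : G // p • x = 0} := by
  let q : f.range →+ f.range := nsmulAddMonoidHom p
  let φ (v : V) : f.range ⧸ q.range := f.rangeRestrict (Function.surjInv hπ v)
  have hφ : φ.Injective := fun v w hvw => by
    obtain ⟨⟨_, a, rfl⟩, ha⟩ := QuotientAddGroup.eq.1 hvw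
    have hmem : p • a - (-Function.surjInv hπ v + Function.surjInv hπ w) ∈ f.ker := by
      have ha' := congrArg Subtype.val ha
      rw [AddMonoidHom.mem_ker, map_sub, _root_.map_nsmul, _root_.map_add, map_neg, sub_eq_zero]
      simpa [q] using ha'
    have := hker hmem
    rw [AddMonoidHom.mem_ker, map_sub, _root_.map_nsmul, hp, _root_.map_add, map_neg,
      Function.surjInv_eq hπ v, Function.surjInv_eq hπ w, zero_sub, neg_eq_zero,
      neg_add_eq_zero] at this
    exact this
  calc Nat.card V ≤ q.range.index := Nat.card_le_card_of_injective φ hφ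
    _ = Nat.card q.ker := AddSubgroup.index_range
    _ ≤ Nat.card {x : G // p • x = 0} :=
      Nat.card_le_card_of_injective
        (fun x => ⟨x.1.1, by simpa [q] using congrArg Subtype.val (AddMonoidHom.mem_ker.1 x.2)⟩)
        fun x y hxy => Subtype.ext (Subtype.ext (by
          simpa only [Subtype.mk.injEq] using hxy))

theorem card_le_pRank_add_one [Fintype ι] (hp : p.Prime) {w : ι → G} {y : ι → ℤ}
    (h : ∀ x ∈ relations ℤ w, ∃ t, ∀ i, (p : ℤ) ∣ x i - t * y i) :
    Fintype.card ι ≤ pRank G p + 1 := by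
  have : Fact p.Prime := ⟨hp⟩
  let yBar : ι → ZMod p := fun i => y i
  let V := (ι → ZMod p) ⧸ Submodule.span (ZMod p) {yBar}
  let red : (ι → ℤ) →+ (ι → ZMod p) := (Int.castAddHom (ZMod p)).compLeft ι
  let π : (ι → ℤ) →+ V := (Submodule.mkQ _).toAddMonoidHom.comp red
  have hπ : Function.Surjective π :=
    (Submodule.mkQ_surjective _).comp (ZMod.intCast_surjective.comp_left)
  have hker : (Fintype.linearCombination ℤ w).toAddMonoidHom.ker ≤ π.ker := fun x hx => by
    obtain ⟨t, ht⟩ := h x hx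
    refine (Submodule.Quotient.mk_eq_zero _).2 (Submodule.mem_span_singleton.2
      ⟨t, funext fun i => ?_⟩)
    have := (ZMod.intCast_zmod_eq_zero_iff_dvd _ p).2 (ht i)
    push_cast at this
    exact (sub_eq_zero.1 this).symm
  have hcard : p ^ Module.finrank (ZMod p) V ≤ Nat.card {x : G // p • x = 0} := by
    have := card_le_card_torsion_of_ker_le _ hπ hker (p := p) fun v => by
      rw [← Nat.cast_smul_eq_nsmul (ZMod p), ZMod.natCast_self, zero_smul]
    rwa [Module.natCard_eq_pow_finrank (K := ZMod p), Nat.card_zmod] at this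
  have hrank : Fintype.card ι ≤ Module.finrank (ZMod p) V + 1 := by
    have hquot : Module.finrank (ZMod p) V + _ = _ :=
      Submodule.finrank_quotient_add_finrank (Submodule.span (ZMod p) {yBar})
    rw [Module.finrank_fintype_fun_eq_card] at hquot
    have hspan : Module.finrank (ZMod p) (Submodule.span (ZMod p) {yBar}) ≤ 1 := by
      simpa using finrank_span_le_card (R := ZMod p) {yBar}
    omega
  exact hrank.trans (Nat.add_le_add_right (Nat.le_log_of_pow_le hp.one_lt hcard) 1)

variable (G) in
theorem bddAbove_setOf_pRank : BddAbove {r : ℕ | ∃ p : ℕ, p.Prime ∧ r = pRank G p} := by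
  refine ⟨Nat.card G, ?_⟩
  rintro _ ⟨p, -, rfl⟩
  exact (Nat.log_le_self _ _).trans (Nat.card_le_card_of_injective _ Subtype.val_injective)

theorem pRank_le_rankG (hp : p.Prime) : pRank G p ≤ rankG G :=
  le_csSup (bddAbove_setOf_pRank G) ⟨p, hp, rfl⟩

variable (G) in
theorem exists_prime_rankG_eq : ∃ p : ℕ, p.Prime ∧ rankG G = pRank G p :=
  Nat.sSup_mem (s := {r | ∃ p : ℕ, p.Prime ∧ r = pRank G p}) ⟨_, 2, Nat.prime_two, rfl⟩
    (bddAbove_setOf_pRank G)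

theorem card_le_rankG_add_one [Fintype ι] {v : ι → G}
    (hv : ¬ relations ℤ v ≤ degenerateSpan (relations ℤ v)) : Fintype.card ι ≤ rankG G + 1 := by
  obtain ⟨c, hc, w, y, h⟩ := exists_relations_dvd_sub_of_not_le_degenerateSpan hv
  obtain ⟨p, hp, hpc⟩ := Nat.exists_prime_and_dvd (mt Int.isUnit_iff_natAbs_eq.2 hc)
  have hle : Fintype.card ι ≤ pRank G p + 1 := card_le_pRank_add_one hp fun x hx => by
    obtain ⟨t, ht⟩ := h x hx
    exact ⟨t, fun i => (Int.natCast_dvd.2 hpc).trans (ht i)⟩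
  exact hle.trans (Nat.add_le_add_right (pRank_le_rankG hp) 1)

end Rank

section MaxMinDistance

variable {G : Type*} [AddCommGroup G]

theorem addOrderOf_natCast_zmod_mul {n m : ℕ} (hn : n ≠ 0) (hm : m ≠ 0) :
    addOrderOf (n : ZMod (n * m)) = m := by
  rw [ZMod.addOrderOf_coe n (mul_ne_zero hn hm), Nat.gcd_mul_right_left,
    Nat.mul_div_cancel_left m (Nat.pos_of_ne_zero hn)]

theorem addOrderOf_le_sSup_deltaStar [Finite G] {S : Set G} {U : Multiset G} (hU : IsAtomSeq S U)
    (hk : crossNumber U ≠ 1) {M : Type*} [AddCommGroup M] {φ : Multiset G →+ M} {u : M}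
    (hφ : ∀ A, IsAtomSeq S A → φ A = u) : addOrderOf u ≤ sSup (DeltaStar G) := by
  have hne : (DeltaSet S).Nonempty := Set.nonempty_iff_ne_empty.2 fun h =>
    hk (hU.crossNumber_eq_one isAddTorsion_of_finite h)
  have hmem := Nat.sInf_mem hne
  have hfin : (DeltaStar G).Finite := by
    refine (Set.finite_range fun S : Set G => sInf (DeltaSet S)).subset ?_
    rintro _ ⟨S, -, rfl⟩
    exact ⟨S, rfl⟩
  calc addOrderOf u ≤ sInf (DeltaSet S) :=
        Nat.le_of_dvd (pos_of_mem_deltaSet hmem) (addOrderOf_dvd_of_mem_deltaSet hφ hmem)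
    _ ≤ sSup (DeltaStar G) := le_csSup hfin.bddAbove ⟨S, hne, rfl⟩

section Exponent

variable {g : G}

theorem IsAtomSeq.eq_ordSeq_of_forall_eq {S : Set G} {A : Multiset G} (hA : IsAtomSeq S A)
    (hg : IsOfFinAddOrder g) (h : ∀ x ∈ A, x = g) : A = ordSeq g := by
  refine hA.eq_ordSeq_of_le hg ?_
  have hrep := Multiset.eq_replicate_card.2 h
  have hsum : A.card • g = 0 := by
    rw [← Multiset.sum_replicate, ← hrep, hA.1.2]
  rw [hrep]
  exact (Multiset.replicate_le_replicate g).2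
    (Nat.le_of_dvd (Multiset.card_pos.2 hA.2.1) (addOrderOf_dvd_of_nsmul_eq_zero hsum))

theorem isZeroSumSeq_pair_neg (g : G) : IsZeroSumSeq {g, -g} ({g, -g} : Multiset G) :=
  ⟨fun x hx => by simpa using hx, by simp⟩

theorem IsAtomSeq.eq_of_pair_neg {A : Multiset G} (hA : IsAtomSeq {g, -g} A)
    (hg : IsOfFinAddOrder g) (hne : g ≠ -g) :
    A = {g, -g} ∨ A = ordSeq g ∨ A = ordSeq (-g) := by
  have hmem (x : G) (hx : x ∈ A) : x = g ∨ x = -g := by simpa using hA.1.1 x hx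
  by_cases hpos : g ∈ A
  · by_cases hneg : -g ∈ A
    · refine Or.inl (hA.eq_of_le (isZeroSumSeq_pair_neg g) (Multiset.cons_ne_zero) ?_)
      rw [Multiset.le_iff_subset (by simpa using hne)]
      intro x hx
      obtain rfl | rfl : x = g ∨ x = -g := by simpa using hx
      exacts [hpos, hneg]
    · exact Or.inr (Or.inl (hA.eq_ordSeq_of_forall_eq hg fun x hx =>
        (hmem x hx).resolve_right fun h => hneg (h ▸ hx)))
  · exact Or.inr (Or.inr (hA.eq_ordSeq_of_forall_eq hg.neg fun x hx =>
      (hmem x hx).resolve_left fun h => hpos (h ▸ hx)))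

theorem addOrderOf_le_sSup_deltaStar_add_two [Finite G] (g : G) :
    addOrderOf g ≤ sSup (DeltaStar G) + 2 := by
  classical
  obtain hle | hlt := le_or_gt (addOrderOf g) 2
  · omega
  let n := addOrderOf g
  obtain ⟨m, hm⟩ : ∃ m, n = m + 2 := ⟨n - 2, by omega⟩
  have hg : IsOfFinAddOrder g := isOfFinAddOrder_of_finite g
  have hne : g ≠ -g := fun h => by
    have hg2 : 2 • g = 0 := by rw [two_nsmul, ← eq_neg_iff_add_eq_zero.1 h]
    have := addOrderOf_le_of_nsmul_eq_zero two_pos hg2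
    omega
  obtain ⟨U, hUle, hU⟩ := (isZeroSumSeq_pair_neg g).exists_isAtomSeq_le Multiset.cons_ne_zero
  have hk : crossNumber U ≠ 1 := by
    have hcard : U.card ≤ 2 := Multiset.card_le_card hUle
    rw [crossNumber_eq_card_div (n := n) fun x hx => ?_]
    · rw [Ne, div_eq_one_iff_eq (by positivity), Nat.cast_inj]
      omega
    · obtain rfl | rfl : x = g ∨ x = -g := by simpa using hU.1.1 x hx
      exacts [rfl, addOrderOf_neg _]
  let w (x : G) : ZMod (n * m) := if x = g then 1 else m + 1
  have hnm : (n : ZMod (n * m)) * m = 0 := by rw [← Nat.cast_mul, ZMod.natCast_self]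
  have hw (A : Multiset G) (hA : IsAtomSeq {g, -g} A) : weightHom w A = n := by
    obtain rfl | rfl | rfl := hA.eq_of_pair_neg hg hne
    · have hpair : weightHom w {g, -g} = 1 + (m + 1) := by simp [weightHom, w, hne.symm]
      rw [hpair, hm]
      push_cast
      ring
    · simp [weightHom_ordSeq, w, n]
    · simp [weightHom_ordSeq, w, hne.symm, hnm, n]
  have := addOrderOf_le_sSup_deltaStar hU hk hw
  rw [addOrderOf_natCast_zmod_mul (by omega) (by omega)] at this
  omega

theorem exponent_le_sSup_deltaStar_add_two [Finite G] :
    AddMonoid.exponent G ≤ sSup (DeltaStar G) + 2 := by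
  obtain ⟨g, hg⟩ := AddMonoid.exists_addOrderOf_eq_exponent (G := G) .of_finite
  exact hg ▸ addOrderOf_le_sSup_deltaStar_add_two g

end Exponent

section Rank

variable {ι : Type*} [Fintype ι] {n : ℕ} {e : ι → G}

/-- The elements `e i` are independent, each of order `n`: the natural relations between them are
those with all coefficients divisible by `n`. -/
def IsIndependentOfOrder (n : ℕ) (e : ι → G) : Prop :=
  ∀ x : ι → ℕ, ∑ i, x i • e i = 0 ↔ ∀ i, n ∣ x i

/-- The family `e` together with the sum of its members, the latter indexed by `none`. -/
def withSum (e : ι → G) (k : Option ι) : G := k.elim (∑ i, e i) e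

namespace IsIndependentOfOrder

variable (he : IsIndependentOfOrder n e)
include he

theorem sum_nsmul_withSum_eq_zero_iff {x : Option ι → ℕ} :
    ∑ k, x k • withSum e k = 0 ↔ ∀ i, n ∣ x none + x (some i) := by
  rw [← he, Fintype.sum_option]
  simp only [withSum, Option.elim_none, Option.elim_some, add_smul, Finset.sum_add_distrib,
    Finset.smul_sum]

theorem addOrderOf_withSum [Nonempty ι] (k : Option ι) : addOrderOf (withSum e k) = n := by
  classical
  have h (m : ℕ) : addOrderOf (withSum e k) ∣ m ↔ n ∣ m := by
    have hsum : m • withSum e k = ∑ l, (Pi.single k m : Option ι → ℕ) l • withSum e l := by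
      simp [Pi.single_apply]
    rw [addOrderOf_dvd_iff_nsmul_eq_zero, hsum, he.sum_nsmul_withSum_eq_zero_iff]
    cases k with
    | none => simp
    | some i =>
      refine ⟨fun h => by simpa using h i, fun h j => ?_⟩
      obtain rfl | hij := eq_or_ne j i <;> simp [*]
  exact Nat.dvd_antisymm ((h n).2 dvd_rfl) ((h _).1 dvd_rfl)

theorem natCast_eq_natCast (hn : n ≠ 0) {x y : ι → ℕ} (h : ∑ i, x i • e i = ∑ i, y i • e i)
    (i : ι) : (x i : ZMod n) = y i := by
  have hny : ∑ i, n • y i • e i = 0 := by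
    simpa only [smul_smul] using (he fun i => n * y i).2 fun i => dvd_mul_right n (y i)
  have hsum : ∑ i, (x i + (n - 1) * y i) • e i = 0 := by
    obtain ⟨m, rfl⟩ := Nat.exists_eq_succ_of_ne_zero hn
    rw [← hny]
    simp only [add_smul, mul_smul, Finset.sum_add_distrib, h, Nat.succ_sub_one, ← Finset.smul_sum,
      succ_nsmul']
  have hdvd := (ZMod.natCast_eq_zero_iff _ n).2 ((he _).1 hsum i)
  rw [Nat.cast_add, Nat.cast_mul, Nat.cast_pred (Nat.pos_of_ne_zero hn), ZMod.natCast_self] at hdvd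
  linear_combination hdvd

theorem injective (hn : 1 < n) : e.Injective := by
  classical
  have : Fact (1 < n) := ⟨hn⟩
  intro i j hij
  by_contra hne
  have hsum : ∑ k, (Pi.single i 1 : ι → ℕ) k • e k = ∑ k, (Pi.single j 1 : ι → ℕ) k • e k := by
    simpa [Pi.single_apply] using hij
  simpa [hne] using he.natCast_eq_natCast (by omega) hsum i

theorem injective_withSum [Nontrivial ι] (hn : 1 < n) : (withSum e).Injective := by
  classical
  have : Fact (1 < n) := ⟨hn⟩
  refine Option.injective_iff.2 ⟨he.injective hn, ?_⟩
  rintro ⟨i, hi⟩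
  obtain ⟨j, hj⟩ := exists_ne i
  have hsum : ∑ k, (Pi.single i 1 : ι → ℕ) k • e k = ∑ k, 1 • e k := by
    simpa [Pi.single_apply] using show e i = ∑ k, e k from hi
  simpa [hj] using he.natCast_eq_natCast (by omega) hsum j

theorem count_add_count_eq [DecidableEq G] [Nontrivial ι] (hn : 1 < n) {A : Multiset G}
    (hA : IsAtomSeq (Set.range (withSum e)) A) (hne : ∀ k, A ≠ ordSeq (withSum e k)) (i : ι) :
    A.count (withSum e none) + A.count (withSum e (some i)) = n := by
  have hu := he.injective_withSum hn
  have hlt (k : Option ι) : A.count (withSum e k) < n := by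
    have hfin : IsOfFinAddOrder (withSum e k) :=
      addOrderOf_pos_iff.1 (by rw [he.addOrderOf_withSum]; omega)
    exact (hA.count_lt_addOrderOf hfin (hne k)).trans_eq (he.addOrderOf_withSum k)
  have hdvd (i : ι) : n ∣ A.count (withSum e none) + A.count (withSum e (some i)) :=
    he.sum_nsmul_withSum_eq_zero_iff (x := fun k => A.count (withSum e k)).1
      ((sum_count_nsmul hu hA.1.1).trans hA.1.2) i
  have hnone : A.count (withSum e none) ≠ 0 := fun h0 => hA.2.1 <| by
    rw [← sum_count_nsmul_singleton hu hA.1.1]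
    refine Finset.sum_eq_zero fun k _ => ?_
    suffices A.count (withSum e k) = 0 by rw [this, zero_nsmul]
    cases k with
    | none => exact h0
    | some i => exact Nat.eq_zero_of_dvd_of_lt (by simpa [h0] using hdvd i) (hlt _)
  obtain ⟨t, ht⟩ := hdvd i
  have := hlt none
  have := hlt (some i)
  obtain rfl : t = 1 := by
    have : 0 < t := Nat.pos_of_ne_zero fun h => by rw [h] at ht; omega
    have : t < 2 := lt_of_mul_lt_mul_left (a := n) (by omega) (Nat.zero_le n)
    omega
  omega

theorem weightHom_eq_of_isAtomSeq [Nontrivial ι] {m : ℕ} (hm : Fintype.card ι = m + 1)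
    (hn : 1 < n) {w : G → ZMod (n * m)} (hnone : w (withSum e none) = m + 1)
    (hsome : ∀ i, w (withSum e (some i)) = 1) {A : Multiset G}
    (hA : IsAtomSeq (Set.range (withSum e)) A) : weightHom w A = n := by
  classical
  have hnm : (n : ZMod (n * m)) * m = 0 := by rw [← Nat.cast_mul, ZMod.natCast_self]
  by_cases hord : ∃ k, A = ordSeq (withSum e k)
  · obtain ⟨k, rfl⟩ := hord
    rw [weightHom_ordSeq, he.addOrderOf_withSum, nsmul_eq_mul]
    cases k with
    | none => rw [hnone, mul_add, hnm, zero_add, mul_one]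
    | some i => rw [hsome, mul_one]
  · have hcount := he.count_add_count_eq hn hA (not_exists.1 hord)
    have hsum : (m + 1) * A.count (withSum e none) + ∑ i, A.count (withSum e (some i)) =
        (m + 1) * n := by
      simpa [Finset.sum_add_distrib, hm] using Fintype.sum_congr _ _ hcount
    rw [← sum_count_nsmul_apply (he.injective_withSum hn) hA.1.1, Fintype.sum_option, hnone]
    simp only [hsome, nsmul_one]
    have hcast := congrArg (Nat.cast : ℕ → ZMod (n * m)) hsum
    push_cast at hcast
    rw [nsmul_eq_mul]
    linear_combination hcast + hnm

theorem exists_isAtomSeq_crossNumber_ne_one [Nontrivial ι] (hn : 1 < n) :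
    ∃ A, IsAtomSeq (Set.range (withSum e)) A ∧ crossNumber A ≠ 1 := by
  classical
  let f (k : Option ι) : ℕ := k.elim 1 fun _ => n - 1
  have hu := he.injective_withSum hn
  have hV := isZeroSumSeq_sum_nsmul_singleton (f := f) <|
    he.sum_nsmul_withSum_eq_zero_iff.2 fun _ => (Nat.add_sub_of_le hn.le).symm.dvd
  have hV0 : ∑ k, f k • ({withSum e k} : Multiset G) ≠ 0 := fun h => by
    simpa [h, f] using count_sum_nsmul_singleton hu f none
  obtain ⟨A, hAle, hA⟩ := hV.exists_isAtomSeq_le hV0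
  have hle (k : Option ι) : A.count (withSum e k) ≤ f k :=
    (Multiset.count_le_of_le _ hAle).trans_eq (count_sum_nsmul_singleton hu f k)
  have hne (k : Option ι) : A ≠ ordSeq (withSum e k) := fun h => by
    have hk := hle k
    rw [h, ordSeq, Multiset.count_replicate_self, he.addOrderOf_withSum] at hk
    cases k <;> simp only [f, Option.elim_none, Option.elim_some] at hk <;> omega
  have hcount (k : Option ι) : A.count (withSum e k) = f k := by
    have hadd (i : ι) : A.count (withSum e none) + A.count (withSum e (some i)) =
        f none + f (some i) :=
      (he.count_add_count_eq hn hA hne i).trans (Nat.add_sub_of_le hn.le).symm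
    obtain ⟨i, hi⟩ : ∃ i, k = none ∨ k = some i := by cases k <;> simp
    have := hadd i
    have := hle none
    have := hle (some i)
    obtain rfl | rfl := hi <;> omega
  have hcard : A.card = 1 + Fintype.card ι * (n - 1) := by
    have h := sum_count_nsmul_apply hu hA.1.1 fun _ => 1
    simpa [hcount, f, weightHom] using h.symm
  refine ⟨A, hA, ?_⟩
  rw [crossNumber_eq_card_div (n := n) fun x hx => ?_]
  · rw [Ne, div_eq_one_iff_eq (by positivity), Nat.cast_inj, hcard]
    have := Nat.mul_le_mul_right (n - 1) (Fintype.one_lt_card (α := ι))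
    omega
  · obtain ⟨k, rfl⟩ := hA.1.1 x hx
    exact he.addOrderOf_withSum k

theorem card_le_sSup_deltaStar_add_one [Finite G] (hn : 1 < n) :
    Fintype.card ι ≤ sSup (DeltaStar G) + 1 := by
  classical
  obtain hle | hlt := le_or_gt (Fintype.card ι) 1
  · omega
  have : Nontrivial ι := Fintype.one_lt_card_iff_nontrivial.1 hlt
  obtain ⟨m, hm⟩ : ∃ m, Fintype.card ι = m + 1 := ⟨Fintype.card ι - 1, by omega⟩
  obtain ⟨U, hU, hk⟩ := he.exists_isAtomSeq_crossNumber_ne_one hn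
  let w (x : G) : ZMod (n * m) := if x = withSum e none then m + 1 else 1
  have hw (A : Multiset G) (hA : IsAtomSeq (Set.range (withSum e)) A) : weightHom w A = n :=
    he.weightHom_eq_of_isAtomSeq hm hn (if_pos rfl)
      (fun i => if_neg ((he.injective_withSum hn).ne (Option.some_ne_none i))) hA
  have := addOrderOf_le_sSup_deltaStar hU hk hw
  rw [addOrderOf_natCast_zmod_mul (by omega) (by omega)] at this
  omega

end IsIndependentOfOrder

theorem exists_isIndependentOfOrder [Finite G] {p : ℕ} (hp : p.Prime) :
    ∃ e : Fin (pRank G p) → G, IsIndependentOfOrder p e := by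
  have : Fact p.Prime := ⟨hp⟩
  let _ : Module (ZMod p) (AddSubgroup.torsionBy G p) := AddSubgroup.torsionBy.zmodModule
  let b := Module.finBasis (ZMod p) (AddSubgroup.torsionBy G p)
  have hrank : pRank G p = Module.finrank (ZMod p) (AddSubgroup.torsionBy G p) := by
    have hcard := Module.natCard_eq_pow_finrank (K := ZMod p) (V := AddSubgroup.torsionBy G p)
    rw [Nat.card_zmod] at hcard
    rw [pRank, ← Nat.log_pow hp.one_lt (Module.finrank _ _), ← hcard]
    exact congrArg _ (Nat.card_congr (Equiv.subtypeEquivRight fun _ =>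
      AddSubgroup.torsionBy.nsmul_iff.symm))
  rw [hrank]
  refine ⟨fun i => b i, fun x => ?_⟩
  have hsum : ∑ i, x i • (b i : G) =
      ((∑ i, (x i : ZMod p) • b i : AddSubgroup.torsionBy G p) : G) := by
    simp [Nat.cast_smul_eq_nsmul]
  simp only [hsum, ZeroMemClass.coe_eq_zero, ← ZMod.natCast_eq_zero_iff]
  exact ⟨Fintype.linearIndependent_iff.1 b.linearIndependent _, fun h => by simp [h]⟩

theorem rankG_le_sSup_deltaStar_add_one [Finite G] : rankG G ≤ sSup (DeltaStar G) + 1 := by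
  obtain ⟨p, hp, hr⟩ := exists_prime_rankG_eq G
  obtain ⟨e, he⟩ := exists_isIndependentOfOrder (G := G) hp
  simpa only [hr, Fintype.card_fin] using he.card_le_sSup_deltaStar_add_one hp.one_lt

end Rank

end MaxMinDistance

/-- If `G₀` is a minimal non-half-factorial LCN-set with
`min Δ(G₀) = max Δ*(G)`, then `|G₀| = r(G) + 1`, `r(G) ≥ exp(G) − 1`, and
`h ∉ ⟨G₀ \ {h, h'}⟩` for all `h ∈ G₀` and `h' ∈ G₀ \ {h}`. -/
theorem stmt_11 {G : Type*} [AddCommGroup G] [Fintype G] (G₀ : Set G)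
    (hmin : IsMinNonHalfFactorial G₀) (hLCN : IsLCNSet G₀)
    (hmax : sInf (DeltaSet G₀) = sSup (DeltaStar G)) :
    G₀.ncard = rankG G + 1 ∧ AddMonoid.exponent G - 1 ≤ rankG G ∧
    ∀ h ∈ G₀, ∀ h' ∈ G₀ \ {h}, h ∉ AddSubgroup.closure (G₀ \ {h, h'}) := by
  obtain ⟨s, rfl⟩ : ∃ s : Finset G, ↑s = G₀ := ⟨_, G₀.toFinite.coe_toFinset⟩
  have hG : IsAddTorsion G := isAddTorsion_of_finite
  have hexp : AddMonoid.exponent G ≤ sInf (DeltaSet (s : Set G)) + 2 :=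
    hmax ▸ exponent_le_sSup_deltaStar_add_two
  have hrank : rankG G ≤ sInf (DeltaSet (s : Set G)) + 1 :=
    hmax ▸ rankG_le_sSup_deltaStar_add_one
  have hlower : sInf (DeltaSet (s : Set G)) + 2 ≤ s.card :=
    hmin.sInf_deltaSet_add_two_le_card hG hLCN
  have hrel := hmin.not_relations_le_degenerateSpan hG hLCN fun g _ =>
    hmax ▸ addOrderOf_le_sSup_deltaStar_add_two g
  have hupper : s.card ≤ rankG G + 1 := by
    simpa only [Fintype.card_coe] using card_le_rankG_add_one hrel
  rw [Set.ncard_coe_finset]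
  exact ⟨by omega, by omega, fun h hh h' hh' hmem =>
    hrel (relations_le_degenerateSpan_of_mem_closure hh hh'.1 hh'.2 hmem)⟩
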